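/- Product rule for paired probabilistic programs: let t and s be closed typed terms of the calculus λ^test_trust. If Pr(u, 𝒯_t) = p and Pr(v, 𝒯_s) = q, then Pr(⟨u, v⟩, 𝒯_{⟨t, s⟩}) = p·q; i.e., the probability that the pair term ⟨t, s⟩ yields the output ⟨u, v⟩ equals the product of the probability that t yields u and the probability that s yields v. -/

import Mathlib

open scoped Classical

/-- Types of the calculus λ^test_trust. -/
inductive Ty : Type where
  | atom : ℕ → Ty
  | arrow : Ty → Ty → Ty
  | sum : List Ty → Ty
  | tuple : Ty → ℕ → Ty
  | bool : List (ℚ × Ty) → ℚ → Ty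

/-- Subtyping relation extending a relation `S` on atomic types.
    The convention identifying a one-summand sum with its summand is included. -/
inductive SubTy (S : ℕ → ℕ → Prop) : Ty → Ty → Prop where
  | refl (A) : SubTy S A A
  | trans {A B C} : SubTy S A B → SubTy S B C → SubTy S A C
  | atom {a b} : S a b → SubTy S (.atom a) (.atom b)
  | arrow {A1 A2 B1 B2} : SubTy S B1 A1 → SubTy S A2 B2 →
      SubTy S (.arrow A1 A2) (.arrow B1 B2)
  | sum {As Bs : List Ty} (g : Fin As.length → Ty) :
      (∀ i, g i ∈ Bs) → (∀ i, SubTy S (As.get i) (g i)) →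
      SubTy S (.sum As) (.sum Bs)
  | tuple {A B m n} : SubTy S A B → n ≤ m → SubTy S (.tuple A m) (.tuple B n)
  | sumSingle (A) : SubTy S (.sum [A]) A
  | singleSum (A) : SubTy S A (.sum [A])

/-- Terms of the calculus λ^test_trust. -/
inductive Tm : Type where
  | tt : Tm
  | ff : Tm
  | var : ℕ → Tm
  | lam : ℕ → Ty → Tm → Tm
  | app : Tm → Tm → Tm
  | choice : List ℚ → List Tm → Tm
  | exp : ℕ → Tm → Tm
  | tup : List Tm → Tm
  | proj : Tm → ℕ → Tm
  | trust : Tm → List (ℚ × Ty) → ℚ → Tm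

mutual
/-- Substitution `t[s/x]`. -/
def subst (x : ℕ) (s : Tm) : Tm → Tm
  | .tt => .tt
  | .ff => .ff
  | .var y => if y = x then s else .var y
  | .lam y A t => if y = x then .lam y A t else .lam y A (subst x s t)
  | .app t u => .app (subst x s t) (subst x s u)
  | .choice qs ts => .choice qs (substList x s ts)
  | .exp n t => .exp n (subst x s t)
  | .tup ts => .tup (substList x s ts)
  | .proj t j => .proj (subst x s t) j
  | .trust t P e => .trust (subst x s t) P e

def substList (x : ℕ) (s : Tm) : List Tm → List Tm
  | [] => []
  | t :: ts => subst x s t :: substList x s ts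
end

/-- Typing judgement of λ^test_trust, relative to an atomic subtyping relation `S`
    and an assignment `env` of types to variables. -/
inductive HasTy (S : ℕ → ℕ → Prop) : (ℕ → Ty) → Tm → Ty → Prop where
  | tt {env P e} : HasTy S env .tt (.bool P e)
  | ff {env P e} : HasTy S env .ff (.bool P e)
  | var {env x} : HasTy S env (.var x) (env x)
  | lam {env x A t B} : HasTy S (Function.update env x A) t B →
      HasTy S env (.lam x A t) (.arrow A B)
  | app {env f u A B C} : HasTy S env f (.arrow A B) → HasTy S env u C →
      SubTy S C A → HasTy S env (.app f u) B
  | appChoice {env f u C} {As : List (Ty × Ty)} :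
      HasTy S env f (.sum (As.map (fun p => Ty.arrow p.1 p.2))) →
      HasTy S env u C → (∀ p ∈ As, SubTy S C p.1) → As ≠ [] →
      HasTy S env (.app f u) (.sum (As.map Prod.snd))
  | choice {env qs ts} {As : List Ty} : qs.length = ts.length → ts ≠ [] → qs.sum = 1 →
      ts.length = As.length →
      (∀ i (h1 : i < ts.length) (h2 : i < As.length),
        HasTy S env (ts.get ⟨i, h1⟩) (As.get ⟨i, h2⟩)) →
      (∃ A, ∀ B ∈ As, SubTy S B A) →
      HasTy S env (.choice qs ts) (.sum As)
  | exp {env n t A} : 1 ≤ n → HasTy S env t A →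
      HasTy S env (.exp n t) (.tuple A n)
  | tup {env ts E} {Es : List Ty} : ts ≠ [] → ts.length = Es.length →
      (∀ i (h1 : i < ts.length) (h2 : i < Es.length),
        HasTy S env (ts.get ⟨i, h1⟩) (Es.get ⟨i, h2⟩)) →
      (∀ E' ∈ Es, SubTy S E' E) → HasTy S env (.tup ts) (.tuple E ts.length)
  | proj {env t A n j} : HasTy S env t (.tuple A n) → 1 ≤ j → j ≤ n →
      HasTy S env (.proj t j) A
  | trust {env t A n P e} : HasTy S env t (.tuple A n) →
      HasTy S env (.trust t P e) (.bool P e)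

/-- Values of λ^test_trust. -/
inductive IsValue : Tm → Prop where
  | tt : IsValue .tt
  | ff : IsValue .ff
  | lam {x A t} : IsValue (.lam x A t)
  | tup {ts} : (∀ u ∈ ts, IsValue u) → IsValue (.tup ts)

/-- `ClosedU V t`: all free variables of `t` are in `V`. -/
inductive ClosedU : List ℕ → Tm → Prop where
  | tt {V} : ClosedU V .tt
  | ff {V} : ClosedU V .ff
  | var {V x} : x ∈ V → ClosedU V (.var x)
  | lam {V x A t} : ClosedU (x :: V) t → ClosedU V (.lam x A t)
  | app {V t u} : ClosedU V t → ClosedU V u → ClosedU V (.app t u)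
  | choice {V qs ts} : (∀ t ∈ ts, ClosedU V t) → ClosedU V (.choice qs ts)
  | exp {V n t} : ClosedU V t → ClosedU V (.exp n t)
  | tup {V ts} : (∀ t ∈ ts, ClosedU V t) → ClosedU V (.tup ts)
  | proj {V t j} : ClosedU V t → ClosedU V (.proj t j)
  | trust {V t P e} : ClosedU V t → ClosedU V (.trust t P e)

/-- `t` is a closed term. -/
def Closed (t : Tm) : Prop := ClosedU [] t

/-- The frequency distribution encoded by the list of types `Ss` is within
    total-variation distance `ε` of the probability distribution `P` over types. -/
def FreqClose (S : ℕ → ℕ → Prop) (Ss : List Ty) (P : List (ℚ × Ty)) (ε : ℚ) : Prop :=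
  (∀ qB ∈ P,
      |((Ss.countP (fun T => decide (SubTy S T qB.2)) : ℚ) / (Ss.length : ℚ)) - qB.1| ≤ ε) ∧
  (∀ T ∈ Ss, ∃ qB ∈ P, SubTy S T qB.2)

/-- The tuple of values `ss` passes the trustworthiness check against `P` with threshold `ε`. -/
def TrustCond (S : ℕ → ℕ → Prop) (env : ℕ → Ty) (ss : List Tm)
    (P : List (ℚ × Ty)) (ε : ℚ) : Prop :=
  ∃ Ss : List Ty, List.Forall₂ (HasTy S env) ss Ss ∧ FreqClose S Ss P ε

/-- Base reduction rules `t ↦ᵢ_p t'` of λ^test_trust; the natural number `i`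
    records which rule instance is used (the index of the chosen branch for a
    probabilistic choice, `0` otherwise), and `p` is the probability label. -/
inductive Step (S : ℕ → ℕ → Prop) (env : ℕ → Ty) : Tm → ℕ → ℚ → Tm → Prop where
  | beta {x A t u} : Step S env (.app (.lam x A t) u) 0 1 (subst x u t)
  | choice {qs ts} {i : ℕ} (h1 : i < qs.length) (h2 : i < ts.length) :
      Step S env (.choice qs ts) i (qs.get ⟨i, h1⟩) (ts.get ⟨i, h2⟩)
  | exp {n t} : Step S env (.exp n t) 0 1 (.tup (List.replicate n t))
  | proj {ts : List Tm} {j : ℕ} (hj : 1 ≤ j) (h : j - 1 < ts.length) :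
      Step S env (.proj (.tup ts) j) 0 1 (ts.get ⟨j - 1, h⟩)
  | trustT {ts P e} : (∀ u ∈ ts, IsValue u) → TrustCond S env ts P e →
      Step S env (.trust (.tup ts) P e) 0 1 .tt
  | trustF {ts P e} : (∀ u ∈ ts, IsValue u) → ¬ TrustCond S env ts P e →
      Step S env (.trust (.tup ts) P e) 0 1 .ff

/-- The call-by-name reduction strategy of λ^test_trust. -/
inductive CBN (S : ℕ → ℕ → Prop) (env : ℕ → Ty) : Tm → ℕ → ℚ → Tm → Prop where
  | base {t i p t'} : Step S env t i p t' → CBN S env t i p t'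
  | appL {t i p t' u} : CBN S env t i p t' → CBN S env (.app t u) i p (.app t' u)
  | tup {pre post : List Tm} {t i p t'} : (∀ u ∈ pre, IsValue u) → ¬ IsValue t →
      CBN S env t i p t' →
      CBN S env (.tup (pre ++ t :: post)) i p (.tup (pre ++ t' :: post))
  | trust {t i p t' P e} : CBN S env t i p t' →
      CBN S env (.trust t P e) i p (.trust t' P e)
  | proj {t i p t' j} : (∀ ts, t ≠ .tup ts) → CBN S env t i p t' →
      CBN S env (.proj t j) i p (.proj t' j)

/-- Redexes of λ^test_trust. -/
inductive IsRedex : Tm → Prop where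
  | beta {x A t u} : IsRedex (.app (.lam x A t) u)
  | choice {qs ts} : IsRedex (.choice qs ts)
  | exp {n t} : IsRedex (.exp n t)
  | proj {ts : List Tm} {j : ℕ} : 1 ≤ j → j ≤ ts.length → IsRedex (.proj (.tup ts) j)
  | trust {ts P e} : (∀ u ∈ ts, IsValue u) → IsRedex (.trust (.tup ts) P e)

/-- `t` contains a redex (as a subterm). -/
inductive HasRedex : Tm → Prop where
  | here {t} : IsRedex t → HasRedex t
  | lam {x A t} : HasRedex t → HasRedex (.lam x A t)
  | appL {t u} : HasRedex t → HasRedex (.app t u)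
  | appR {t u} : HasRedex u → HasRedex (.app t u)
  | choice {qs ts t} : t ∈ ts → HasRedex t → HasRedex (.choice qs ts)
  | exp {n t} : HasRedex t → HasRedex (.exp n t)
  | tup {ts t} : t ∈ ts → HasRedex t → HasRedex (.tup ts)
  | proj {t j} : HasRedex t → HasRedex (.proj t j)
  | trust {t P e} : HasRedex t → HasRedex (.trust t P e)

/-- Full (unrestricted) one-step reduction: a base reduction applied in an
    arbitrary position. -/
inductive Full (S : ℕ → ℕ → Prop) (env : ℕ → Ty) : Tm → Tm → Prop where
  | base {t t' i p} : Step S env t i p t' → Full S env t t'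
  | lam {x A t t'} : Full S env t t' → Full S env (.lam x A t) (.lam x A t')
  | appL {t t' u} : Full S env t t' → Full S env (.app t u) (.app t' u)
  | appR {t u u'} : Full S env u u' → Full S env (.app t u) (.app t u')
  | choice {qs pre post t t'} : Full S env t t' →
      Full S env (.choice qs (pre ++ t :: post)) (.choice qs (pre ++ t' :: post))
  | exp {n t t'} : Full S env t t' → Full S env (.exp n t) (.exp n t')
  | tup {pre post t t'} : Full S env t t' →
      Full S env (.tup (pre ++ t :: post)) (.tup (pre ++ t' :: post))
  | proj {t t' j} : Full S env t t' → Full S env (.proj t j) (.proj t' j)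
  | trust {t t' P e} : Full S env t t' → Full S env (.trust t P e) (.trust t' P e)
/-- Maximal CBN reduction paths: `PathTo S env t l o` holds when `l` records a
    complete branch of the reduction tree of `t` (each entry giving the rule
    instance, its probability label and the resulting term) ending at the
    leaf `o`. -/
inductive PathTo (S : ℕ → ℕ → Prop) (env : ℕ → Ty) :
    Tm → List (ℕ × ℚ × Tm) → Tm → Prop where
  | nil {t} : (∀ i p t', ¬ CBN S env t i p t') → PathTo S env t [] t
  | cons {t i p t' l o} : CBN S env t i p t' → PathTo S env t' l o →
      PathTo S env t ((i, p, t') :: l) o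

/-- The product of the probability labels along a path. -/
def pathWeight (l : List (ℕ × ℚ × Tm)) : ℝ :=
  (l.map (fun e => ((e.2.1 : ℚ) : ℝ))).prod

/-- `PrOut S env t o` is the output probability `Pr(o, 𝒯_t)`: the sum, over all
    leaves of the reduction tree `𝒯_t` at which the term `o` occurs, of the
    products of the labels along the corresponding root-to-leaf paths. -/
noncomputable def PrOut (S : ℕ → ℕ → Prop) (env : ℕ → Ty) (t o : Tm) : ℝ :=
  ∑' l : {l : List (ℕ × ℚ × Tm) // PathTo S env t l o}, pathWeight l.1

/-- `lamsAux k [A₀, …, A_{m-1}] b = λx_k^{A₀}. … λx_{k+m-1}^{A_{m-1}}. b`. -/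
def lamsAux : ℕ → List Ty → Tm → Tm
  | _, [], b => b
  | k, A :: As, b => .lam k A (lamsAux (k + 1) As b)

/-- The body `{p₁⟨t₁,x₁⟩, …, pₙ⟨tₙ,xₙ⟩}` of a conditional construct. -/
def condBody (qs : List ℚ) (ts : List Tm) : Tm :=
  .choice qs (List.zipWith (fun t k => Tm.tup [t, .var k]) ts (List.range ts.length))

/-- The conditional construct `(s₁, …, sₙ ∣ {p₁t₁, …, pₙtₙ})`, i.e. the term
    `(λx₁^{A₁}. … λxₙ^{Aₙ}. {p₁⟨t₁,x₁⟩, …, pₙ⟨tₙ,xₙ⟩}) s₁ … sₙ`. -/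
def condConstruct (qs : List ℚ) (ts ss : List Tm) (As : List Ty) : Tm :=
  ss.foldl Tm.app (lamsAux 0 As (condBody qs ts))


inductive PGood (S : ℕ → ℕ → Prop) (env : ℕ → Ty) (P : Tm → Prop) : Tm → Prop where
  | leaf {t} : P t → PGood S env P t
  | step {t} : (∀ ts, t ≠ .tup ts) → (∃ i p t', CBN S env t i p t') →
      (∀ i p t', CBN S env t i p t' → PGood S env P t') → PGood S env P t

inductive PSafe (S : ℕ → ℕ → Prop) (env : ℕ → Ty) : Tm → Prop where
  | leaf {t} : IsValue t → PSafe S env t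
  | step {t} : (∃ i p t', CBN S env t i p t') →
      (∀ i p t', CBN S env t i p t' → PSafe S env t') → PSafe S env t

theorem PGood.mono {S env} {P Q : Tm → Prop} (h : ∀ t, P t → Q t) {t} (ht : PGood S env P t) :
    PGood S env Q t := by
  induction ht with
  | leaf hp => exact .leaf (h _ hp)
  | step h1 h2 _ ih => exact .step h1 h2 ih

mutual
def PV (S : ℕ → ℕ → Prop) (env : ℕ → Ty) : Ty → Tm → Prop
  | .atom _, _ => False
  | .arrow A B, t => ∃ x A' b, t = .lam x A' b ∧
      ∀ u, Closed u → PGood S env (PV S env A) u → PGood S env (PV S env B) (subst x u b)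
  | .sum As, t => PVL S env As t
  | .tuple A n, t => ∃ ts, t = .tup ts ∧ n ≤ ts.length ∧ ∀ u ∈ ts, PGood S env (PV S env A) u
  | .bool _ _, t => t = .tt ∨ t = .ff

def PVL (S : ℕ → ℕ → Prop) (env : ℕ → Ty) : List Ty → Tm → Prop
  | [], _ => False
  | A :: As, t => PV S env A t ∨ PVL S env As t
end

theorem PVL_iff {S env t} (As : List Ty) : PVL S env As t ↔ ∃ A ∈ As, PV S env A t := by
  induction As with
  | nil => simp [PVL]
  | cons A As ih => simp [PVL, ih]

theorem PV_sub {S env A B} (h : SubTy S A B) : ∀ t, PV S env A t → PV S env B t := by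
  induction h with
  | refl => exact fun _ h => h
  | trans _ _ ih1 ih2 => exact fun t h => ih2 t (ih1 t h)
  | atom => intro t h; simp [PV] at h
  | arrow _ _ ih1 ih2 =>
    intro t h
    simp only [PV] at h ⊢
    obtain ⟨x, A', b, rfl, h⟩ := h
    exact ⟨x, A', b, rfl, fun u hu hg => (h u hu (hg.mono ih1)).mono ih2⟩
  | sum g hg _ ih =>
    intro t h
    simp only [PV, PVL_iff] at h ⊢
    obtain ⟨A, hA, h⟩ := h
    obtain ⟨i, rfl⟩ := List.get_of_mem hA
    exact ⟨g i, hg i, ih i t h⟩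
  | tuple _ hn ih =>
    intro t h
    simp only [PV] at h ⊢
    obtain ⟨ts, rfl, h1, h2⟩ := h
    exact ⟨ts, rfl, hn.trans h1, fun u hu => (h2 u hu).mono ih⟩
  | sumSingle => intro t h; simpa [PV, PVL] using h
  | singleSum => intro t h; simpa [PV, PVL] using h

theorem value_no_step {S env t i p t'} (h : CBN S env t i p t') : ¬ IsValue t := by
  intro hv
  cases h with
  | base h => cases h <;> cases hv
  | appL => cases hv
  | tup _ h2 _ => cases hv with | tup h => exact h2 (h _ (by simp))
  | trust => cases hv
  | proj => cases hv

theorem decomp_unique {pre pre' post post' : List Tm} {t t'}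
    (h : pre ++ t :: post = pre' ++ t' :: post')
    (h1 : ∀ u ∈ pre, IsValue u) (h2 : ∀ u ∈ pre', IsValue u)
    (h3 : ¬ IsValue t) (h4 : ¬ IsValue t') : pre = pre' ∧ t = t' ∧ post = post' := by
  induction pre generalizing pre' with
  | nil =>
    cases pre' with
    | nil => simpa using h
    | cons a l =>
      simp at h
      exact absurd (h2 a (by simp)) (h.1 ▸ h3)
  | cons b k ih =>
    cases pre' with
    | nil =>
      simp at h
      exact absurd (h1 b (by simp)) (h.1 ▸ h4)
    | cons a l =>
      simp at h
      have := ih h.2 (fun u hu => h1 u (by simp [hu])) (fun u hu => h2 u (by simp [hu]))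
      simp [h.1, this]

theorem cbn_tup {S env ts i p t'} (h : CBN S env (.tup ts) i p t') :
    ∃ pre t post r, ts = pre ++ t :: post ∧ (∀ u ∈ pre, IsValue u) ∧ ¬ IsValue t ∧
      CBN S env t i p r ∧ t' = .tup (pre ++ r :: post) := by
  cases h with
  | base h => cases h
  | tup h1 h2 h3 => exact ⟨_, _, _, _, rfl, h1, h2, h3, rfl⟩

theorem cbn_tup' {S env pre t post i p t'} (h : CBN S env (.tup (pre ++ t :: post)) i p t')
    (h1 : ∀ u ∈ pre, IsValue u) (h2 : ¬ IsValue t) :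
    ∃ r, CBN S env t i p r ∧ t' = .tup (pre ++ r :: post) := by
  obtain ⟨pre', t₁, post', r, e, a, b, c, d⟩ := cbn_tup h
  obtain ⟨rfl, rfl, rfl⟩ := decomp_unique e h1 a h2 b
  exact ⟨r, c, d⟩

theorem safe_tup_aux {S env} (post : List Tm) (hpost : ∀ u ∈ post, PSafe S env u) :
    ∀ (pre : List Tm) (t : Tm), (∀ u ∈ pre, IsValue u) → PSafe S env t →
      PSafe S env (.tup (pre ++ t :: post)) := by
  induction post with
  | nil =>
    intro pre t hpre ht
    induction ht with
    | leaf hv =>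
      refine .leaf (.tup ?_)
      intro u hu
      simp at hu
      rcases hu with hu | rfl
      · exact hpre u hu
      · exact hv
    | step h1 _ ih =>
      obtain ⟨i, p, t', h⟩ := h1
      refine .step ⟨i, p, _, .tup hpre (value_no_step h) h⟩ ?_
      intro i p t' h'
      obtain ⟨r, hr, rfl⟩ := cbn_tup' h' hpre (value_no_step h)
      exact ih _ _ _ hr
  | cons a post ihp =>
    intro pre t hpre ht
    induction ht with
    | @leaf t hv =>
      have := ihp (fun u hu => hpost u (by simp [hu])) (pre ++ [t]) a
        (by
          intro u hu
          simp at hu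
          rcases hu with hu | rfl
          · exact hpre u hu
          · exact hv) (hpost a (by simp))
      simpa using this
    | step h1 _ ih =>
      obtain ⟨i, p, t', h⟩ := h1
      refine .step ⟨i, p, _, .tup hpre (value_no_step h) h⟩ ?_
      intro i p t' h'
      obtain ⟨r, hr, rfl⟩ := cbn_tup' h' hpre (value_no_step h)
      exact ih _ _ _ hr

theorem safe_tup {S env} (ts : List Tm) (h : ∀ u ∈ ts, PSafe S env u) :
    PSafe S env (.tup ts) := by
  cases ts with
  | nil => exact .leaf (.tup (by simp))
  | cons a l => exact safe_tup_aux l (fun u hu => h u (by simp [hu])) [] a (by simp) (h a (by simp))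

theorem good_safe {S env} {P : Tm → Prop} (h : ∀ t, P t → PSafe S env t) {t}
    (ht : PGood S env P t) : PSafe S env t := by
  induction ht with
  | leaf hp => exact h _ hp
  | step _ h2 _ ih => exact .step h2 ih

mutual
theorem PV_safe (S : ℕ → ℕ → Prop) (env : ℕ → Ty) : ∀ (A : Ty) (t : Tm), PV S env A t → PSafe S env t
  | .atom _, t, h => by simp [PV] at h
  | .arrow A B, t, h => by
    simp only [PV] at h
    obtain ⟨x, A', b, rfl, h⟩ := h
    exact .leaf .lam
  | .sum As, t, h => PVL_safe S env As t (by simpa [PV] using h)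
  | .tuple A n, t, h => by
    simp only [PV] at h
    obtain ⟨ts, rfl, _, h⟩ := h
    exact safe_tup ts (fun u hu => good_safe (PV_safe S env A) (h u hu))
  | .bool _ _, t, h => by
    simp only [PV] at h
    rcases h with rfl | rfl
    · exact .leaf .tt
    · exact .leaf .ff
theorem PVL_safe (S : ℕ → ℕ → Prop) (env : ℕ → Ty) : ∀ (As : List Ty) (t : Tm),
    PVL S env As t → PSafe S env t
  | [], t, h => by simp [PVL] at h
  | A :: As, t, h => by
    simp only [PVL] at h
    rcases h with h | h
    · exact PV_safe S env A t h
    · exact PVL_safe S env As t h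
end

theorem good_app {S env P Q} {f u : Tm} (hf : PGood S env P f)
    (h : ∀ f, P f → ∃ x A b, f = .lam x A b ∧ PGood S env Q (subst x u b)) :
    PGood S env Q (.app f u) := by
  induction hf with
  | leaf hp =>
    obtain ⟨x, A, b, rfl, hb⟩ := h _ hp
    refine .step (by simp) ⟨_, _, _, .base .beta⟩ ?_
    intro i p t' h'
    cases h' with
    | base h => cases h; exact hb
    | appL h => exact absurd .lam (value_no_step h)
  | step _ h1 _ ih =>
    obtain ⟨i, p, t', h1⟩ := h1
    refine .step (by simp) ⟨_, _, _, .appL h1⟩ ?_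
    intro i p t' h'
    cases h' with
    | base h => cases h; exact absurd .lam (value_no_step h1)
    | appL h => exact ih _ _ _ h

theorem good_proj {S env A n j} {t : Tm} (ht : PGood S env (PV S env (.tuple A n)) t)
    (h1 : 1 ≤ j) (h2 : j ≤ n) : PGood S env (PV S env A) (.proj t j) := by
  induction ht with
  | leaf hp =>
    simp only [PV] at hp
    obtain ⟨ts, rfl, hn, hp⟩ := hp
    refine .step (by simp) ⟨_, _, _, .base (.proj h1 (by omega))⟩ ?_
    intro i p t' h'
    cases h' with
    | base h => cases h; exact hp _ (List.get_mem _ _)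
    | proj h => exact absurd rfl (h ts)
  | step hn h1 _ ih =>
    obtain ⟨i, p, t', h1⟩ := h1
    refine .step (by simp) ⟨_, _, _, .proj hn h1⟩ ?_
    intro i p t' h'
    cases h' with
    | base h => cases h; exact absurd rfl (hn _)
    | proj _ h => exact ih _ _ _ h

theorem good_trust_tup {S env P e} {t : Tm} (ht : PSafe S env t) (hts : ∃ ts, t = .tup ts) :
    PGood S env (PV S env (.bool P e)) (.trust t P e) := by
  induction ht with
  | leaf hv =>
    obtain ⟨ts, rfl⟩ := hts
    cases hv with
    | tup hv =>
    refine .step (by simp) ?_ ?_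
    · by_cases hc : TrustCond S env ts P e
      · exact ⟨_, _, _, .base (.trustT hv hc)⟩
      · exact ⟨_, _, _, .base (.trustF hv hc)⟩
    intro i p t' h'
    cases h' with
    | base h => cases h <;> exact .leaf (by simp [PV])
    | trust h => exact absurd (.tup hv) (value_no_step h)
  | step h1 _ ih =>
    obtain ⟨ts, rfl⟩ := hts
    obtain ⟨i, p, t', h1⟩ := h1
    refine .step (by simp) ⟨_, _, _, .trust h1⟩ ?_
    intro i p t' h'
    cases h' with
    | base h => cases h <;> exact .leaf (by simp [PV])
    | trust h =>
      obtain ⟨pre, _, post, r, _, _, _, _, e⟩ := cbn_tup h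
      exact ih _ _ _ h ⟨_, e⟩

theorem good_trust {S env A n P e} {t : Tm} (ht : PGood S env (PV S env (.tuple A n)) t) :
    PGood S env (PV S env (.bool P e)) (.trust t P e) := by
  induction ht with
  | leaf hp =>
    have hs := PV_safe _ _ _ _ hp
    simp only [PV] at hp
    obtain ⟨ts, rfl, hn, hp⟩ := hp
    exact good_trust_tup hs ⟨_, rfl⟩
  | step hn h1 _ ih =>
    obtain ⟨i, p, t', h1⟩ := h1
    refine .step (by simp) ⟨_, _, _, .trust h1⟩ ?_
    intro i p t' h'
    cases h' with
    | base h => cases h <;> exact .leaf (by simp [PV])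
    | trust h => exact ih _ _ _ h

/-- Parallel substitution. -/
def psub : (ℕ → Option Tm) → Tm → Tm
  | _, .tt => .tt
  | _, .ff => .ff
  | σ, .var y => (σ y).getD (.var y)
  | σ, .lam y A t => .lam y A (psub (Function.update σ y none) t)
  | σ, .app t u => .app (psub σ t) (psub σ u)
  | σ, .choice qs ts => .choice qs (ts.attach.map (fun t => psub σ t.1))
  | σ, .exp n t => .exp n (psub σ t)
  | σ, .tup ts => .tup (ts.attach.map (fun t => psub σ t.1))
  | σ, .proj t j => .proj (psub σ t) j
  | σ, .trust t P e => .trust (psub σ t) P e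
termination_by _ t => sizeOf t
decreasing_by all_goals (simp_wf <;> first | done | omega | (have := List.sizeOf_lt_of_mem t.2; omega))

theorem substList_eq (x s) (ts : List Tm) : substList x s ts = ts.map (subst x s) := by
  induction ts with
  | nil => simp [substList]
  | cons a l ih => simp [substList, ih]

theorem subst_notin {V t} (h : ClosedU V t) : ∀ x s, x ∉ V → subst x s t = t := by
  induction h with
  | tt => intros; simp [subst]
  | ff => intros; simp [subst]
  | var h => intro x s hx; simp only [subst]; split_ifs with hh
             · subst hh; exact absurd h hx
             · rfl
  | lam _ ih =>
    intro x s hx; simp only [subst]; split_ifs with hh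
    · rfl
    · rw [ih x s (by simp [hx]; tauto)]
  | app _ _ ih1 ih2 => intro x s hx; simp [subst, ih1 x s hx, ih2 x s hx]
  | choice _ ih =>
    intro x s hx
    simp only [subst, substList_eq]
    congr 1
    exact (List.map_congr_left (fun t ht => ih t ht x s hx)).trans (List.map_id' _)
  | exp _ ih => intro x s hx; simp [subst, ih x s hx]
  | tup _ ih =>
    intro x s hx
    simp only [subst, substList_eq]
    congr 1
    exact (List.map_congr_left (fun t ht => ih t ht x s hx)).trans (List.map_id' _)
  | proj _ ih => intro x s hx; simp [subst, ih x s hx]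
  | trust _ ih => intro x s hx; simp [subst, ih x s hx]

theorem psub_none {V t} (h : ClosedU V t) : psub (fun _ => none) t = t := by
  induction h with
  | tt => simp [psub]
  | ff => simp [psub]
  | var h => simp [psub]
  | lam _ ih => simpa [psub] using ih
  | app _ _ ih1 ih2 => simp [psub, ih1, ih2]
  | choice _ ih =>
    simp only [psub, List.map_attach_eq_pmap, List.pmap_eq_map]
    congr 1
    exact (List.map_congr_left (fun t ht => ih t ht)).trans (List.map_id' _)
  | exp _ ih => simp [psub, ih]
  | tup _ ih =>
    simp only [psub, List.map_attach_eq_pmap, List.pmap_eq_map]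
    congr 1
    exact (List.map_congr_left (fun t ht => ih t ht)).trans (List.map_id' _)
  | proj _ ih => simp [psub, ih]
  | trust _ ih => simp [psub, ih]

theorem closed_weaken {V t} (h : ClosedU V t) : ∀ W, (∀ x ∈ V, x ∈ W) → ClosedU W t := by
  induction h with
  | tt => intros; exact .tt
  | ff => intros; exact .ff
  | var h => intro W hW; exact .var (hW _ h)
  | lam _ ih => intro W hW; exact .lam (ih _ (by simp; tauto))
  | app _ _ ih1 ih2 => intro W hW; exact .app (ih1 W hW) (ih2 W hW)
  | choice _ ih => intro W hW; exact .choice (fun t ht => ih t ht W hW)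
  | exp _ ih => intro W hW; exact .exp (ih W hW)
  | tup _ ih => intro W hW; exact .tup (fun t ht => ih t ht W hW)
  | proj _ ih => intro W hW; exact .proj (ih W hW)
  | trust _ ih => intro W hW; exact .trust (ih W hW)

theorem psub_closed {V t} (h : ClosedU V t) : ∀ (W : List ℕ) (σ : ℕ → Option Tm),
    (∀ x ∈ V, (x ∈ W ∧ σ x = none) ∨ ∃ u, σ x = some u ∧ Closed u) → ClosedU W (psub σ t) := by
  induction h with
  | tt => intros; simp only [psub]; exact .tt
  | ff => intros; simp only [psub]; exact .ff
  | var h =>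
    intro W σ hW
    simp only [psub]
    rcases hW _ h with ⟨h1, h2⟩ | ⟨u, h1, h2⟩
    · rw [h2]; exact .var h1
    · rw [h1]; exact closed_weaken h2 W (by simp)
  | @lam V x A t _ ih =>
    intro W σ hW
    simp only [psub]
    refine .lam (ih _ _ ?_)
    intro y hy
    by_cases hxy : y = x
    · left; simp [hxy]
    · have hy' : y ∈ V := by simpa [hxy] using hy
      rcases hW y hy' with h | h
      · left; simp [hxy, h]
      · right; simpa [hxy] using h
  | app _ _ ih1 ih2 =>
    intro W σ hW; simp only [psub]; exact .app (ih1 W σ hW) (ih2 W σ hW)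
  | choice _ ih =>
    intro W σ hW
    simp only [psub, List.map_attach_eq_pmap, List.pmap_eq_map]
    refine .choice ?_
    intro t ht
    obtain ⟨a, ha, rfl⟩ := List.mem_map.1 ht
    exact ih a ha W σ hW
  | exp _ ih => intro W σ hW; simp only [psub]; exact .exp (ih W σ hW)
  | tup _ ih =>
    intro W σ hW
    simp only [psub, List.map_attach_eq_pmap, List.pmap_eq_map]
    refine .tup ?_
    intro t ht
    obtain ⟨a, ha, rfl⟩ := List.mem_map.1 ht
    exact ih a ha W σ hW
  | proj _ ih => intro W σ hW; simp only [psub]; exact .proj (ih W σ hW)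
  | trust _ ih => intro W σ hW; simp only [psub]; exact .trust (ih W σ hW)

theorem subst_psub {V t} (h : ClosedU V t) : ∀ (σ : ℕ → Option Tm) (x : ℕ) (u : Tm),
    (∀ y w, σ y = some w → Closed w) → σ x = none →
    subst x u (psub σ t) = psub (Function.update σ x (some u)) t := by
  induction h with
  | tt => intros; simp [psub, subst]
  | ff => intros; simp [psub, subst]
  | @var V y h =>
    intro σ x u hσ hx
    simp only [psub]
    by_cases hxy : y = x
    · subst hxy; simp [hx, subst]
    · cases hy : σ y with
      | none => simp [hxy, subst, hy]
      | some w => simpa [hxy, hy] using subst_notin (hσ y w hy) x u (by simp)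
  | @lam V y A t _ ih =>
    intro σ x u hσ hx
    simp only [psub, subst]
    split_ifs with hxy
    · subst hxy; simp
    · rw [ih, Function.update_comm hxy]
      · intro z w hz
        by_cases hzy : z = y
        · simp [hzy] at hz
        · exact hσ z w (by simpa [hzy] using hz)
      · rw [Function.update_of_ne (Ne.symm hxy)]; exact hx
  | app _ _ ih1 ih2 =>
    intro σ x u hσ hx; simp only [psub, subst, ih1 σ x u hσ hx, ih2 σ x u hσ hx]
  | choice _ ih =>
    intro σ x u hσ hx
    simp only [psub, List.map_attach_eq_pmap, List.pmap_eq_map, subst, substList_eq, List.map_map]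
    congr 1
    exact List.map_congr_left (fun t ht => ih t ht σ x u hσ hx)
  | exp _ ih => intro σ x u hσ hx; simp only [psub, subst, ih σ x u hσ hx]
  | tup _ ih =>
    intro σ x u hσ hx
    simp only [psub, List.map_attach_eq_pmap, List.pmap_eq_map, subst, substList_eq, List.map_map]
    congr 1
    exact List.map_congr_left (fun t ht => ih t ht σ x u hσ hx)
  | proj _ ih => intro σ x u hσ hx; simp only [psub, subst, ih σ x u hσ hx]
  | trust _ ih => intro σ x u hσ hx; simp only [psub, subst, ih σ x u hσ hx]

theorem fundamental {S env0 env t T} (h : HasTy S env t T) :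
    ∀ (V : List ℕ) (σ : ℕ → Option Tm), ClosedU V t →
    (∀ y w, σ y = some w → Closed w) →
    (∀ x ∈ V, ∃ w, σ x = some w ∧ PGood S env0 (PV S env0 (env x)) w) →
    PGood S env0 (PV S env0 T) (psub σ t) := by
  induction h with
  | tt => intros; simp only [psub]; exact .leaf (by simp [PV])
  | ff => intros; simp only [psub]; exact .leaf (by simp [PV])
  | var =>
    intro V σ hV hσ hg
    cases hV with
    | var h =>
      obtain ⟨w, h1, h2⟩ := hg _ h
      simpa [psub, h1] using h2
  | @lam env x A t B _ ih =>
    intro V σ hV hσ hg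
    cases hV with
    | lam hV =>
    simp only [psub]
    refine .leaf ?_
    simp only [PV]
    refine ⟨_, _, _, rfl, ?_⟩
    intro u hu hug
    rw [subst_psub hV _ _ _ _ (by simp), Function.update_idem]
    · refine ih _ _ hV ?_ ?_
      · intro y w hy
        by_cases hyx : y = x
        · subst hyx; simp at hy; exact hy ▸ hu
        · exact hσ y w (by simpa [hyx] using hy)
      · intro y hy
        by_cases hyx : y = x
        · subst hyx; exact ⟨u, by simp, by simpa using hug⟩
        · have := hg y (by simpa [hyx] using hy)
          simpa [hyx] using this
    · intro y w hy
      by_cases hyx : y = x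
      · simp [hyx] at hy
      · exact hσ y w (by simpa [hyx] using hy)
  | @app env f u A B C _ _ hsub ih1 ih2 =>
    intro V σ hV hσ hg
    cases hV with
    | app hV1 hV2 =>
    have hcl : Closed (psub σ u) := psub_closed hV2 [] σ (fun x hx => by
      obtain ⟨w, h1, _⟩ := hg x hx
      exact .inr ⟨w, h1, hσ _ _ h1⟩)
    simp only [psub]
    refine good_app (ih1 V σ hV1 hσ hg) ?_
    intro f hf
    simp only [PV] at hf
    obtain ⟨x, A', b, rfl, hf⟩ := hf
    exact ⟨x, A', b, rfl, hf _ hcl ((ih2 V σ hV2 hσ hg).mono (PV_sub hsub))⟩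
  | @appChoice env f u C As _ _ hsub _ ih1 ih2 =>
    intro V σ hV hσ hg
    cases hV with
    | app hV1 hV2 =>
    have hcl : Closed (psub σ u) := psub_closed hV2 [] σ (fun x hx => by
      obtain ⟨w, h1, _⟩ := hg x hx
      exact .inr ⟨w, h1, hσ _ _ h1⟩)
    simp only [psub]
    refine good_app (ih1 V σ hV1 hσ hg) ?_
    intro f hf
    simp only [PV, PVL_iff] at hf
    obtain ⟨A, hA, hf⟩ := hf
    obtain ⟨p, hp, rfl⟩ := List.mem_map.1 hA
    simp only [PV] at hf
    obtain ⟨x, A', b, rfl, hf⟩ := hf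
    refine ⟨x, A', b, rfl, ?_⟩
    refine (hf _ hcl ((ih2 V σ hV2 hσ hg).mono (PV_sub (hsub p hp)))).mono ?_
    intro t ht
    simp only [PV, PVL_iff]
    exact ⟨p.2, List.mem_map.2 ⟨p, hp, rfl⟩, ht⟩
  | @choice env qs ts As hlen hne _ hlen2 _ _ ih =>
    intro V σ hV hσ hg
    cases hV with
    | choice hV =>
    simp only [psub, List.map_attach_eq_pmap, List.pmap_eq_map]
    have hpos : 0 < ts.length := List.length_pos_iff.2 hne
    refine .step (by simp) ⟨_, _, _, .base (.choice (i := 0) (by omega) (by simpa using hpos))⟩ ?_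
    intro i p t' h'
    cases h' with
    | base h =>
      cases h with
      | choice h1 h2 =>
        have h2' : i < ts.length := by simpa using h2
        have := ih i h2' (by omega) V σ (hV _ (List.get_mem _ _)) hσ hg
        simp only [List.get_eq_getElem, List.getElem_map] at this ⊢
        refine this.mono ?_
        intro t ht
        simp only [PV, PVL_iff]
        exact ⟨_, List.getElem_mem _, ht⟩
  | exp hn _ ih =>
    intro V σ hV hσ hg
    cases hV with
    | exp hV =>
    simp only [psub]
    refine .step (by simp) ⟨_, _, _, .base .exp⟩ ?_
    intro i p t' h'
    cases h' with
    | base h =>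
      cases h
      refine .leaf ?_
      simp only [PV]
      refine ⟨_, rfl, by simp, ?_⟩
      intro u hu
      rw [List.eq_of_mem_replicate hu]
      exact ih V σ hV hσ hg
  | @tup env ts E Es hne hlen _ hsub ih =>
    intro V σ hV hσ hg
    cases hV with
    | tup hV =>
    simp only [psub, List.map_attach_eq_pmap, List.pmap_eq_map]
    refine .leaf ?_
    simp only [PV]
    refine ⟨_, rfl, by simp, ?_⟩
    intro u hu
    obtain ⟨a, ha, rfl⟩ := List.mem_map.1 hu
    obtain ⟨⟨i, hi⟩, rfl⟩ := List.get_of_mem ha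
    exact (ih i hi (by omega) V σ (hV _ ha) hσ hg).mono (PV_sub (hsub _ (List.get_mem _ _)))
  | proj _ h1 h2 ih =>
    intro V σ hV hσ hg
    cases hV with
    | proj hV =>
    simp only [psub]
    exact good_proj (ih V σ hV hσ hg) h1 h2
  | trust _ ih =>
    intro V σ hV hσ hg
    cases hV with
    | trust hV =>
    simp only [psub]
    exact good_trust (ih V σ hV hσ hg)

theorem typed_safe {S env t T} (h : HasTy S env t T) (hc : Closed t) : PSafe S env t := by
  have := fundamental (env0 := env) h [] (fun _ => none) hc (by simp) (by simp)
  rw [psub_none hc] at this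
  exact good_safe (PV_safe S env T) this

theorem safe_path {S env t l o} (h : PathTo S env t l o) : PSafe S env t → IsValue o := by
  induction h with
  | nil hn =>
    intro h
    cases h with
    | leaf h => exact h
    | step h1 _ => obtain ⟨i, p, t', h⟩ := h1; exact absurd h (hn _ _ _)
  | cons h1 _ ih =>
    intro h
    cases h with
    | leaf h => exact absurd h (value_no_step h1)
    | step _ h => exact ih (h _ _ _ h1)

def liftL (s : Tm) (l : List (ℕ × ℚ × Tm)) : List (ℕ × ℚ × Tm) :=
  l.map (fun e => (e.1, e.2.1, .tup [e.2.2, s]))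
def liftR (u : Tm) (l : List (ℕ × ℚ × Tm)) : List (ℕ × ℚ × Tm) :=
  l.map (fun e => (e.1, e.2.1, .tup [u, e.2.2]))

theorem cbn_pair_left {S env t s i p r} (ht : ¬ IsValue t)
    (h : CBN S env (.tup [t, s]) i p r) : ∃ t', CBN S env t i p t' ∧ r = .tup [t', s] :=
  cbn_tup' (pre := []) (post := [s]) h (by simp) ht

theorem cbn_pair_right {S env t s i p r} (ht : IsValue t)
    (h : CBN S env (.tup [t, s]) i p r) : ∃ s', CBN S env s i p s' ∧ r = .tup [t, s'] := by
  have hs : ¬ IsValue s := fun hs => value_no_step h (.tup (by simp [ht, hs]))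
  exact cbn_tup' (pre := [t]) (post := []) h (by simpa using ht) hs

theorem cbn_mk_left {S env t s i p t'} (h : CBN S env t i p t') :
    CBN S env (.tup [t, s]) i p (.tup [t', s]) :=
  .tup (pre := []) (post := [s]) (by simp) (value_no_step h) h

theorem cbn_mk_right {S env t s i p s'} (ht : IsValue t) (h : CBN S env s i p s') :
    CBN S env (.tup [t, s]) i p (.tup [t, s']) :=
  .tup (pre := [t]) (post := []) (by simpa using ht) (value_no_step h) h

theorem path_right {S env u s l v} (hu : IsValue u) (h : PathTo S env s l v) :
    PathTo S env (.tup [u, s]) (liftR u l) (.tup [u, v]) := by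
  induction h with
  | nil hn =>
    refine .nil ?_
    intro i p t' h
    obtain ⟨s', h, _⟩ := cbn_pair_right hu h
    exact hn _ _ _ h
  | cons h1 _ ih => exact .cons (cbn_mk_right hu h1) ih

theorem path_both {S env t s l₁ l₂ u v} (h : PathTo S env t l₁ u) (hu : IsValue u)
    (h' : PathTo S env s l₂ v) :
    PathTo S env (.tup [t, s]) (liftL s l₁ ++ liftR u l₂) (.tup [u, v]) := by
  induction h with
  | nil hn => exact path_right hu h'
  | cons h1 _ ih => exact .cons (cbn_mk_left h1) (ih hu)

theorem path_inv {S env r l o} (h : PathTo S env r l o) : ∀ t s u v, r = .tup [t, s] →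
    o = .tup [u, v] → PSafe S env t →
    ∃ l₁ l₂, PathTo S env t l₁ u ∧ PathTo S env s l₂ v ∧ l = liftL s l₁ ++ liftR u l₂ := by
  induction h with
  | nil hn =>
    intro t s u v h1 h2 _
    subst h1
    simp at h2
    obtain ⟨rfl, rfl⟩ := h2
    rename_i hsafe
    have ht : ∀ i p t', ¬ CBN S env t i p t' := fun i p t' h => hn _ _ _ (cbn_mk_left h)
    have hv : IsValue t := safe_path (.nil ht) hsafe
    exact ⟨[], [], .nil ht, .nil (fun i p t' h => hn _ _ _ (cbn_mk_right hv h)), rfl⟩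
  | @cons r i p r' l o h1 _ ih =>
    intro t s u v e1 e2 hsafe
    subst e1
    by_cases hv : IsValue t
    · obtain ⟨s', hs, rfl⟩ := cbn_pair_right hv h1
      obtain ⟨l₁, l₂, a, b, c⟩ := ih t s' u v rfl e2 hsafe
      cases a with
      | nil hn =>
        refine ⟨[], (i, p, s') :: l₂, .nil hn, .cons hs b, ?_⟩
        rw [c]; simp [liftL, liftR]
      | cons h => exact absurd hv (value_no_step h)
    · obtain ⟨t', ht, rfl⟩ := cbn_pair_left hv h1
      have hsafe' : PSafe S env t' := by
        cases hsafe with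
        | leaf h => exact absurd h hv
        | step _ h => exact h _ _ _ ht
      obtain ⟨l₁, l₂, a, b, c⟩ := ih t' s u v rfl e2 hsafe'
      refine ⟨(i, p, t') :: l₁, l₂, .cons ht a, b, ?_⟩
      rw [c]; simp [liftL, liftR]

theorem liftR_inj {u l l'} (h : liftR u l = liftR u l') : l = l' := by
  refine List.map_injective_iff.2 ?_ h
  rintro ⟨a, b, c⟩ ⟨a', b', c'⟩ h
  simpa using h

theorem lift_inj {S env t l₁ u} (h : PathTo S env t l₁ u) : ∀ {s l₁' l₂ l₂'},
    PathTo S env t l₁' u → IsValue u →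
    liftL s l₁ ++ liftR u l₂ = liftL s l₁' ++ liftR u l₂' → l₁ = l₁' ∧ l₂ = l₂' := by
  induction h with
  | nil hn =>
    intro s l₁' l₂ l₂' h' _ e
    cases h' with
    | nil => exact ⟨rfl, liftR_inj (by simpa [liftL] using e)⟩
    | cons h => exact absurd h (hn _ _ _)
  | cons h1 _ ih =>
    intro s l₁' l₂ l₂' h' hu e
    cases h' with
    | nil hn => exact absurd h1 (hn _ _ _)
    | cons h2 h3 =>
      simp [liftL] at e
      obtain ⟨⟨rfl, rfl, rfl⟩, e⟩ := e
      have := ih h3 hu (by simpa [liftL] using e)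
      simp [this]

theorem weight_lift (s u l₁ l₂) :
    pathWeight (liftL s l₁ ++ liftR u l₂) = pathWeight l₁ * pathWeight l₂ := by
  simp [pathWeight, liftL, liftR, Function.comp_def]

theorem tsum_mul_all {α β : Type*} (f : α → ℝ) (g : β → ℝ) :
    ∑' z : α × β, f z.1 * g z.2 = (∑' x, f x) * ∑' y, g y := by
  by_cases hf0 : f = 0
  · simp [hf0]
  by_cases hg0 : g = 0
  · simp [hg0]
  obtain ⟨a, ha⟩ := Function.ne_iff.1 hf0
  obtain ⟨b, hb⟩ := Function.ne_iff.1 hg0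
  by_cases hf : Summable f
  · by_cases hg : Summable g
    · have := summable_mul_of_summable_norm hf.norm hg.norm
      exact (hf.tsum_mul_tsum hg this).symm
    · rw [tsum_eq_zero_of_not_summable hg, mul_zero]
      refine tsum_eq_zero_of_not_summable fun h => hg ?_
      have := h.comp_injective (i := fun y : β => (a, y)) (fun x y h => by simpa using h)
      exact (summable_mul_left_iff ha).1 this
  · rw [tsum_eq_zero_of_not_summable hf, zero_mul]
    refine tsum_eq_zero_of_not_summable fun h => hf ?_
    have := h.comp_injective (i := fun x : α => (x, b)) (fun x y h => by simpa using h)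
    exact (summable_mul_right_iff hb).1 this

/-- **Product rule for paired probabilistic programs**: for closed typed terms
    `t` and `s`, if `Pr(u, 𝒯_t) = p` and `Pr(v, 𝒯_s) = q`, then
    `Pr(⟨u, v⟩, 𝒯_{⟨t, s⟩}) = p·q`. -/
theorem pair_output_probability (S : ℕ → ℕ → Prop) (env : ℕ → Ty)
    (t s u v : Tm) (T1 T2 : Ty)
    (ht : HasTy S env t T1) (hs : HasTy S env s T2)
    (hct : Closed t) (hcs : Closed s) (p q : ℝ)
    (hp : PrOut S env t u = p) (hq : PrOut S env s v = q) :
    PrOut S env (.tup [t, s]) (.tup [u, v]) = p * q := by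
  subst hp hq
  have hsafe := typed_safe ht hct
  unfold PrOut
  rw [← tsum_mul_all]
  symm
  let F : {l // PathTo S env t l u} × {l // PathTo S env s l v} →
      {l // PathTo S env (.tup [t, s]) l (.tup [u, v])} := fun z =>
    ⟨liftL s z.1.1 ++ liftR u z.2.1, path_both z.1.2 (safe_path z.1.2 hsafe) z.2.2⟩
  have hF : Function.Bijective F := by
    constructor
    · rintro ⟨⟨a, ha⟩, ⟨b, hb⟩⟩ ⟨⟨a', ha'⟩, ⟨b', hb'⟩⟩ h
      obtain ⟨e1, e2⟩ := lift_inj (l₂ := b) (l₂' := b') ha ha' (safe_path ha hsafe)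
        (congrArg Subtype.val h)
      subst e1 e2
      rfl
    · rintro ⟨l, hl⟩
      obtain ⟨l₁, l₂, a, b, c⟩ := path_inv hl t s u v rfl rfl hsafe
      exact ⟨⟨⟨l₁, a⟩, ⟨l₂, b⟩⟩, Subtype.ext c.symm⟩
  rw [← (Equiv.ofBijective F hF).tsum_eq]
  refine tsum_congr fun z => ?_
  exact (weight_lift s u _ _).symm
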